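/- Let Γ be a generalised hexagon of finite order (s,t) with s > 1 and t > 1, and let S be a set of s+1 points of Γ such that no point of Γ is opposite every member of S. Suppose p0, p1 ∈ S are opposite, and L is a line of Γ such that each of p0 and p1 is close to L and L contains no point of S. Then every point of S is close to L, and every point of L is collinear to exactly one point of S. -/

import Mathlib

/-- An incidence structure of points and lines, each line being a set of points. -/
structure GenHexagon where
  Point : Type
  Line : Type
  pts : Line → Set Point

namespace GenHexagon

variable (Γ : GenHexagon)

/-- Adjacency of the bipartite incidence graph on the disjoint union of points and lines:
a point is adjacent to a line iff the point lies on the line. -/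
def incAdj : Γ.Point ⊕ Γ.Line → Γ.Point ⊕ Γ.Line → Prop
  | Sum.inl x, Sum.inr L => x ∈ Γ.pts L
  | Sum.inr L, Sum.inl x => x ∈ Γ.pts L
  | _, _ => False

/-- The bipartite incidence graph. -/
def incGraph : SimpleGraph (Γ.Point ⊕ Γ.Line) where
  Adj := Γ.incAdj
  symm := ⟨by rintro (x | L) (y | M) h <;> simp_all [incAdj]⟩
  loopless := ⟨by rintro (x | L) h <;> simp_all [incAdj]⟩

/-- `Γ` is a generalised hexagon: its incidence graph has diameter `6` and girth `12`. -/
def IsGenHexagon : Prop :=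
  Γ.incGraph.ediam = 6 ∧ Γ.incGraph.egirth = 12

/-- Two points are collinear if they are distinct and some line contains both. -/
def Collinear (x y : Γ.Point) : Prop :=
  x ≠ y ∧ ∃ L, x ∈ Γ.pts L ∧ y ∈ Γ.pts L

/-- Two points are special if they are distinct, non-collinear, and collinear
to a common point. -/
def Special (x y : Γ.Point) : Prop :=
  x ≠ y ∧ ¬ Γ.Collinear x y ∧ ∃ z, Γ.Collinear x z ∧ Γ.Collinear y z

/-- Two points are opposite if they are distinct, non-collinear and non-special. -/
def Opposite (x y : Γ.Point) : Prop :=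
  x ≠ y ∧ ¬ Γ.Collinear x y ∧ ¬ Γ.Special x y

/-- `Γ` has order `(s, t)`: every line contains exactly `s + 1` points and every
point lies on exactly `t + 1` lines. -/
def HasOrder (s t : ℕ) : Prop :=
  (∀ L, (Γ.pts L).encard = s + 1) ∧ (∀ x, {L | x ∈ Γ.pts L}.encard = t + 1)

/-- `Γ` is thick: every line contains at least `3` points and every point lies on
at least `3` lines. -/
def Thick : Prop :=
  (∀ L, 3 ≤ (Γ.pts L).encard) ∧ (∀ x, 3 ≤ {L | x ∈ Γ.pts L}.encard)

/-- A point is close to a line if it is collinear to exactly one point of that line. -/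
def CloseTo (x : Γ.Point) (L : Γ.Line) : Prop :=
  ∃! y, y ∈ Γ.pts L ∧ Γ.Collinear x y

/-- Two lines are opposite if they are disjoint and no point of one is collinear to
a point of the other. -/
def OppLines (L M : Γ.Line) : Prop :=
  (∀ x ∈ Γ.pts L, x ∉ Γ.pts M) ∧
  (∀ x ∈ Γ.pts L, ∀ y ∈ Γ.pts M, ¬ Γ.Collinear x y)

/-- The distance-3 trace `[L,M]₃` of two (opposite) lines: the set of points close to
both `L` and `M`. -/
def trace3 (L M : Γ.Line) : Set Γ.Point :=
  {x | Γ.CloseTo x L ∧ Γ.CloseTo x M}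

/-- The distance-3 trace `[L,M]₃` is regular if `[N,M]₃ = [L,M]₃` for every line `N`
opposite `M` such that `[N,M]₃` and `[L,M]₃` share at least two points. -/
def RegularTrace3 (L M : Γ.Line) : Prop :=
  ∀ N, Γ.OppLines N M → (Γ.trace3 N M ∩ Γ.trace3 L M).Nontrivial →
    Γ.trace3 N M = Γ.trace3 L M

/-- A hyperbolic line: a set `H` of pairwise special points, all collinear to a common
point `p`, such that for every point `q` opposite `p` to which at least two points of `H`
are special, the set of points special to `q` and collinear to `p` equals `H`. -/
def IsHyperbolicLine (H : Set Γ.Point) : Prop :=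
  (∀ x ∈ H, ∀ y ∈ H, x ≠ y → Γ.Special x y) ∧
  ∃ p, (∀ x ∈ H, Γ.Collinear x p) ∧
    ∀ q, Γ.Opposite q p → {x ∈ H | Γ.Special q x}.Nontrivial →
      {x | Γ.Special q x ∧ Γ.Collinear x p} = H

/-- A round-up triple: no point of `Γ` is opposite exactly one of `x₁, x₂, x₃`. -/
def RoundUpTriple (x₁ x₂ x₃ : Γ.Point) : Prop :=
  ∀ y : Γ.Point,
    ¬ ((Γ.Opposite y x₁ ∧ ¬ Γ.Opposite y x₂ ∧ ¬ Γ.Opposite y x₃) ∨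
       (¬ Γ.Opposite y x₁ ∧ Γ.Opposite y x₂ ∧ ¬ Γ.Opposite y x₃) ∨
       (¬ Γ.Opposite y x₁ ∧ ¬ Γ.Opposite y x₂ ∧ Γ.Opposite y x₃))

/-- A geometric line: a set `T` of points such that each point of `Γ` is either opposite
no member of `T`, or non-opposite to exactly one member of `T`. -/
def IsGeometricLine (T : Set Γ.Point) : Prop :=
  ∀ y : Γ.Point, (∀ x ∈ T, ¬ Γ.Opposite y x) ∨ (∃! x, x ∈ T ∧ ¬ Γ.Opposite y x)

end GenHexagon

namespace SimpleGraph

variable {V : Type*} {G : SimpleGraph V}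

/-- Two paths with the same ends whose lengths sum to less than the girth coincide. -/
theorem Walk.IsPath.eq_of_length_add_lt_egirth {u v : V} {p q : G.Walk u v} (hp : p.IsPath)
    (hq : q.IsPath) (h : ((p.length + q.length : ℕ) : ℕ∞) < G.egirth) : p = q := by
  classical
  let H : SimpleGraph V := fromEdgeSet {e | e ∈ p.edges ++ q.edges}
  have mem_H {e : Sym2 V} (he : e ∈ p.edges ++ q.edges) : e ∈ H.edgeSet := by
    have hG : e ∈ G.edgeSet := by
      rcases List.mem_append.1 he with he | he
      · exact p.edges_subset_edgeSet he
      · exact q.edges_subset_edgeSet he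
    rw [edgeSet_fromEdgeSet]
    exact ⟨he, G.not_isDiag_of_mem_edgeSet hG⟩
  have of_mem_H {e : Sym2 V} (he : e ∈ H.edgeSet) : e ∈ p.edges ++ q.edges := by
    rw [edgeSet_fromEdgeSet] at he
    exact he.1
  have hH : H.IsAcyclic := by
    intro a c hc
    have hcG : ∀ e ∈ c.edges, e ∈ G.edgeSet := by
      intro e he
      rcases List.mem_append.1 (of_mem_H (c.edges_subset_edgeSet he)) with he | he
      · exact p.edges_subset_edgeSet he
      · exact q.edges_subset_edgeSet he
    have hle : c.length ≤ p.length + q.length := by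
      have := (hc.isTrail.edges_nodup.subperm
        fun e he => of_mem_H (c.edges_subset_edgeSet he)).length_le
      simpa using this
    have hg := egirth_le_length (hc.transfer hcG)
    rw [Walk.length_transfer] at hg
    exact absurd (h.trans_le hg) (not_lt.2 (by exact_mod_cast hle))
  have hpH : ∀ e ∈ p.edges, e ∈ H.edgeSet := fun e he => mem_H (List.mem_append_left _ he)
  have hqH : ∀ e ∈ q.edges, e ∈ H.edgeSet := fun e he => mem_H (List.mem_append_right _ he)
  have huniq := congrArg Subtype.val
    ((hH.subsingleton_path u v).elim ⟨p.transfer H hpH, hp.transfer hpH⟩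
      ⟨q.transfer H hqH, hq.transfer hqH⟩)
  exact Walk.ext_support (by simpa using congrArg Walk.support huniq)

/-- Below half the girth, a vertex has at most one neighbour closer to a given vertex. -/
theorem Connected.eq_of_dist_eq_add_one (hG : G.Connected) {u v w w' : V} (hw : G.Adj w v)
    (hw' : G.Adj w' v) (h : ((2 * G.dist u v : ℕ) : ℕ∞) < G.egirth)
    (hd : G.dist u v = G.dist u w + 1) (hd' : G.dist u v = G.dist u w' + 1) : w = w' := by
  obtain ⟨p, hp⟩ := hG.exists_walk_length_eq_dist u w
  obtain ⟨q, hq⟩ := hG.exists_walk_length_eq_dist u w'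
  have hp' : (p.concat hw).length = G.dist u v := by rw [Walk.length_concat, hp, hd]
  have hq' : (q.concat hw').length = G.dist u v := by rw [Walk.length_concat, hq, hd']
  have heq : p.concat hw = q.concat hw' :=
    (Walk.isPath_of_length_eq_dist _ hp').eq_of_length_add_lt_egirth
      (Walk.isPath_of_length_eq_dist _ hq') (by rwa [hp', hq', ← two_mul])
  exact (Walk.concat_inj heq).1

theorem Connected.exists_adj_dist_eq_add_one (hG : G.Connected) {u v : V} (h : u ≠ v) :
    ∃ w, G.Adj v w ∧ G.dist u v = G.dist u w + 1 := by
  obtain ⟨p, hp⟩ := hG.exists_walk_length_eq_dist v u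
  cases p with
  | nil => exact absurd rfl h
  | @cons _ w _ hvw p =>
    refine ⟨w, hvw, ?_⟩
    rw [dist_comm, dist_comm (u := u) (v := w)]
    have h₁ := dist_le p
    have h₂ := hG.dist_triangle (u := v) (v := w) (w := u)
    rw [dist_eq_one_iff_adj.2 hvw] at h₂
    rw [Walk.length_cons] at hp
    lia

end SimpleGraph

namespace GenHexagon

variable {Γ : GenHexagon}

/-- The incidence graph is bipartite, with the points and the lines as colour classes. -/
def incColoring (Γ : GenHexagon) : Γ.incGraph.Coloring Bool :=
  SimpleGraph.Coloring.mk Sum.isLeft (by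
    rintro (x | L) (y | M) h
    · exact h.elim
    · simp
    · simp
    · exact h.elim)

/-- Distance in the incidence graph. -/
noncomputable abbrev incDist (Γ : GenHexagon) (u v : Γ.Point ⊕ Γ.Line) : ℕ :=
  Γ.incGraph.dist u v

theorem incGraph_adj {x : Γ.Point} {L : Γ.Line} (h : x ∈ Γ.pts L) :
    Γ.incGraph.Adj (Sum.inl x) (Sum.inr L) := h

namespace IsGenHexagon

theorem connected (hΓ : Γ.IsGenHexagon) (x : Γ.Point) : Γ.incGraph.Connected where
  preconnected u v := by
    have h := Γ.incGraph.edist_le_ediam (u := u) (v := v)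
    rw [hΓ.1] at h
    exact SimpleGraph.edist_ne_top_iff_reachable.1 (ne_top_of_le_ne_top (by decide) h)
  nonempty := ⟨Sum.inl x⟩

theorem incDist_le_six (hΓ : Γ.IsGenHexagon) (u v : Γ.Point ⊕ Γ.Line) : Γ.incDist u v ≤ 6 := by
  have h := Γ.incGraph.edist_le_ediam (u := u) (v := v)
  rw [hΓ.1] at h
  exact ENat.toNat_le_of_le_natCast h

theorem even_incDist (hΓ : Γ.IsGenHexagon) (x y : Γ.Point) :
    Even (Γ.incDist (Sum.inl x) (Sum.inl y)) := by
  obtain ⟨p, hp⟩ := (hΓ.connected x).exists_walk_length_eq_dist (Sum.inl x) (Sum.inl y)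
  rw [incDist, ← hp, Γ.incColoring.even_length_iff_congr]
  exact Iff.rfl

theorem odd_incDist (hΓ : Γ.IsGenHexagon) (x : Γ.Point) (L : Γ.Line) :
    Odd (Γ.incDist (Sum.inl x) (Sum.inr L)) := by
  obtain ⟨p, hp⟩ := (hΓ.connected x).exists_walk_length_eq_dist (Sum.inl x) (Sum.inr L)
  rw [incDist, ← hp, Γ.incColoring.odd_length_iff_not_congr]
  change ¬ (true = true) ↔ (false = true)
  simp

/-- The distances from a point to the two members of a flag differ by one. -/
theorem incDist_flag (hΓ : Γ.IsGenHexagon) (p : Γ.Point) {x : Γ.Point} {L : Γ.Line}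
    (h : x ∈ Γ.pts L) :
    Γ.incDist (Sum.inl p) (Sum.inr L) = Γ.incDist (Sum.inl p) (Sum.inl x) + 1 ∨
      Γ.incDist (Sum.inl p) (Sum.inl x) = Γ.incDist (Sum.inl p) (Sum.inr L) + 1 := by
  have h₁ := (incGraph_adj h).diff_dist_adj (u := Sum.inl p)
  have h₂ := hΓ.even_incDist p x
  have h₃ := hΓ.odd_incDist p L
  simp only [incDist] at *
  grind

theorem eq_of_incDist_eq_add_one (hΓ : Γ.IsGenHexagon) (p : Γ.Point) {v w w' : Γ.Point ⊕ Γ.Line}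
    (hw : Γ.incGraph.Adj w v) (hw' : Γ.incGraph.Adj w' v) (h : Γ.incDist (Sum.inl p) v < 6)
    (hd : Γ.incDist (Sum.inl p) v = Γ.incDist (Sum.inl p) w + 1)
    (hd' : Γ.incDist (Sum.inl p) v = Γ.incDist (Sum.inl p) w' + 1) : w = w' := by
  refine (hΓ.connected p).eq_of_dist_eq_add_one hw hw' ?_ hd hd'
  rw [hΓ.2]
  have : 2 * Γ.incDist (Sum.inl p) v < 12 := by lia
  exact_mod_cast this

/-- Every line contains a nearest point to a given point. -/
theorem exists_nearest (hΓ : Γ.IsGenHexagon) (p : Γ.Point) (M : Γ.Line) :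
    ∃ y ∈ Γ.pts M, Γ.incDist (Sum.inl p) (Sum.inr M) = Γ.incDist (Sum.inl p) (Sum.inl y) + 1 := by
  obtain ⟨w, hw, hd⟩ := (hΓ.connected p).exists_adj_dist_eq_add_one
    (u := Sum.inl p) (v := Sum.inr M) (by simp)
  rcases w with y | N
  · exact ⟨y, hw, hd⟩
  · exact hw.elim

theorem nearest_unique (hΓ : Γ.IsGenHexagon) (p : Γ.Point) {M : Γ.Line} {y z : Γ.Point}
    (hy : y ∈ Γ.pts M) (hz : z ∈ Γ.pts M)
    (hdy : Γ.incDist (Sum.inl p) (Sum.inr M) = Γ.incDist (Sum.inl p) (Sum.inl y) + 1)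
    (hdz : Γ.incDist (Sum.inl p) (Sum.inr M) = Γ.incDist (Sum.inl p) (Sum.inl z) + 1) : y = z := by
  have h₁ := hΓ.odd_incDist p M
  have h₂ := hΓ.incDist_le_six (Sum.inl p) (Sum.inr M)
  exact Sum.inl_injective (hΓ.eq_of_incDist_eq_add_one p (incGraph_adj hy) (incGraph_adj hz)
    (by grind) hdy hdz)

/-- At most one line through a point `x` at distance less than `6` from `p` is nearer to `p`. -/
theorem nearest_line_unique (hΓ : Γ.IsGenHexagon) (p : Γ.Point) {x : Γ.Point} {M N : Γ.Line}
    (hM : x ∈ Γ.pts M) (hN : x ∈ Γ.pts N) (h : Γ.incDist (Sum.inl p) (Sum.inl x) < 6)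
    (hdM : Γ.incDist (Sum.inl p) (Sum.inl x) = Γ.incDist (Sum.inl p) (Sum.inr M) + 1)
    (hdN : Γ.incDist (Sum.inl p) (Sum.inl x) = Γ.incDist (Sum.inl p) (Sum.inr N) + 1) : M = N :=
  Sum.inr_injective (hΓ.eq_of_incDist_eq_add_one p (incGraph_adj hM).symm (incGraph_adj hN).symm
    h hdM hdN)

theorem incDist_eq_zero (hΓ : Γ.IsGenHexagon) {x y : Γ.Point} :
    Γ.incDist (Sum.inl x) (Sum.inl y) = 0 ↔ x = y := by
  rw [incDist, (hΓ.connected x).dist_eq_zero_iff, Sum.inl.injEq]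

theorem incDist_eq_one (x : Γ.Point) (L : Γ.Line) :
    Γ.incDist (Sum.inl x) (Sum.inr L) = 1 ↔ x ∈ Γ.pts L :=
  SimpleGraph.dist_eq_one_iff_adj

theorem collinear_iff (hΓ : Γ.IsGenHexagon) {x y : Γ.Point} :
    Γ.Collinear x y ↔ Γ.incDist (Sum.inl x) (Sum.inl y) = 2 := by
  constructor
  · rintro ⟨hne, L, hx, hy⟩
    have h₁ := hΓ.incDist_flag x hy
    have h₂ := (incDist_eq_one x L).2 hx
    have h₃ := mt hΓ.incDist_eq_zero.1 hne
    lia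
  · intro h
    refine ⟨fun hxy => ?_, ?_⟩
    · rw [hΓ.incDist_eq_zero.2 hxy] at h
      lia
    obtain ⟨w, hw, hd⟩ := (hΓ.connected x).exists_adj_dist_eq_add_one
      (u := Sum.inl x) (v := Sum.inl y) (by
        intro hxy
        rw [hΓ.incDist_eq_zero.2 (Sum.inl_injective hxy)] at h
        lia)
    rcases w with z | L
    · exact hw.elim
    · exact ⟨L, (incDist_eq_one x L).1 (by simp only [incDist] at *; lia), hw⟩

theorem opposite_of_incDist_eq_six (hΓ : Γ.IsGenHexagon) {x y : Γ.Point}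
    (h : Γ.incDist (Sum.inl x) (Sum.inl y) = 6) : Γ.Opposite x y := by
  refine ⟨fun hxy => ?_, fun hxy => ?_, ?_⟩
  · rw [hΓ.incDist_eq_zero.2 hxy] at h
    lia
  · rw [hΓ.collinear_iff.1 hxy] at h
    lia
  · rintro ⟨-, -, z, hxz, hyz⟩
    have h₁ := hΓ.collinear_iff.1 hxz
    have h₂ := hΓ.collinear_iff.1 hyz
    have h₃ := (hΓ.connected x).dist_triangle (u := Sum.inl x) (v := Sum.inl z) (w := Sum.inl y)
    rw [SimpleGraph.dist_comm (u := Sum.inl z)] at h₃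
    simp only [incDist] at *
    lia

/-- Let `S` be a finite set of points, no larger than the line `M`, all at distance `5` from `M`.
If two members of `S` have the same nearest point on `M`, some point is opposite all of `S`. -/
theorem exists_opposite_of_forall_incDist_eq_five (hΓ : Γ.IsGenHexagon) {S : Set Γ.Point}
    (hfin : S.Finite) {M : Γ.Line} (hcard : S.ncard ≤ (Γ.pts M).ncard)
    (hM : ∀ p ∈ S, Γ.incDist (Sum.inl p) (Sum.inr M) = 5) {p q x : Γ.Point} (hp : p ∈ S)
    (hq : q ∈ S) (hpq : p ≠ q) (hx : x ∈ Γ.pts M)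
    (hpx : Γ.incDist (Sum.inl p) (Sum.inl x) = 4) (hqx : Γ.incDist (Sum.inl q) (Sum.inl x) = 4) :
    ∃ y, ∀ p ∈ S, Γ.Opposite y p := by
  choose g hg hgd using fun p => hΓ.exists_nearest p M
  have hgx : ∀ r ∈ S, Γ.incDist (Sum.inl r) (Sum.inl x) = 4 → g r = x := fun r hr hrx =>
    hΓ.nearest_unique r (hg r) hx (hgd r) (by rw [hM r hr, hrx])
  by_contra! hno
  refine hpq (Set.inj_on_of_surj_on_of_ncard_le (fun r _ => g r) (fun r _ => hg r) ?_ hcard hp hq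
    ((hgx p hp hpx).trans (hgx q hq hqx).symm) hfin)
  intro y hy
  obtain ⟨r, hr, hnot⟩ := hno y
  refine ⟨r, hr, hΓ.nearest_unique r (hg r) hy (hgd r) ?_⟩
  rcases hΓ.incDist_flag r hy with h | h
  · exact h
  · refine absurd (hΓ.opposite_of_incDist_eq_six ?_) hnot
    rw [incDist, SimpleGraph.dist_comm]
    simpa [hM r hr] using h

theorem closeTo_of_collinear (hΓ : Γ.IsGenHexagon) {p x : Γ.Point} {L : Γ.Line}
    (hp : p ∉ Γ.pts L) (hx : x ∈ Γ.pts L) (h : Γ.Collinear p x) : Γ.CloseTo p L := by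
  have key : ∀ y ∈ Γ.pts L, Γ.Collinear p y →
      Γ.incDist (Sum.inl p) (Sum.inr L) = Γ.incDist (Sum.inl p) (Sum.inl y) + 1 := by
    intro y hy hpy
    have h₁ := hΓ.collinear_iff.1 hpy
    have h₂ := mt (incDist_eq_one p L).1 hp
    have h₃ := hΓ.incDist_flag p hy
    lia
  exact ⟨x, ⟨hx, h⟩, fun y hy => hΓ.nearest_unique p hy.1 hx (key y hy.1 hy.2) (key x hx h)⟩

end IsGenHexagon

theorem Collinear.symm {x y : Γ.Point} (h : Γ.Collinear x y) : Γ.Collinear y x :=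
  ⟨h.1.symm, h.2.imp fun _ hL => ⟨hL.2, hL.1⟩⟩

end GenHexagon

/-- Claim 3 in the proof: if `p₀, p₁ ∈ S` are opposite and a line `L` close to both
contains no point of `S`, then every point of `S` is close to `L` and every point of `L`
is collinear to exactly one point of `S`. -/
theorem claim3_close_line (Γ : GenHexagon) (hΓ : Γ.IsGenHexagon)
    (s t : ℕ) (hs : 1 < s) (ht : 1 < t) (hord : Γ.HasOrder s t)
    (S : Set Γ.Point) (hS : S.encard = s + 1)
    (hblock : ¬ ∃ y : Γ.Point, ∀ x ∈ S, Γ.Opposite y x)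
    (p₀ p₁ : Γ.Point) (hp₀ : p₀ ∈ S) (hp₁ : p₁ ∈ S) (hopp : Γ.Opposite p₀ p₁)
    (L : Γ.Line) (hc₀ : Γ.CloseTo p₀ L) (hc₁ : Γ.CloseTo p₁ L)
    (hLS : ∀ p ∈ S, p ∉ Γ.pts L) :
    (∀ p ∈ S, Γ.CloseTo p L) ∧ (∀ x ∈ Γ.pts L, ∃! p, p ∈ S ∧ Γ.Collinear x p) := by
  have hSfin : S.Finite := Set.finite_of_encard_eq_coe (k := s + 1) (by exact_mod_cast hS)
  have hScard : S.ncard = s + 1 := by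
    rw [Set.ncard, hS]
    exact_mod_cast ENat.toNat_natCast (s + 1)
  have hLcard : ∀ M, (Γ.pts M).ncard = s + 1 := by
    intro M
    rw [Set.ncard, hord.1 M]
    exact_mod_cast ENat.toNat_natCast (s + 1)
  choose f hf hfd using fun p => hΓ.exists_nearest p L
  have hfx : ∀ p ∈ S, ∀ x ∈ Γ.pts L, Γ.Collinear x p → f p = x := by
    intro p hp x hx hxp
    have h₁ := hΓ.collinear_iff.1 hxp.symm
    have h₂ := mt (GenHexagon.IsGenHexagon.incDist_eq_one p L).1 (hLS p hp)
    have h₃ := hΓ.incDist_flag p hx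
    exact hΓ.nearest_unique p (hf p) hx (hfd p) (by lia)
  have hdL : ∀ p ∈ S, Γ.incDist (Sum.inl p) (Sum.inr L) = 3 ∨
      Γ.incDist (Sum.inl p) (Sum.inr L) = 5 := by
    intro p hp
    have h₁ := mt (GenHexagon.IsGenHexagon.incDist_eq_one p L).1 (hLS p hp)
    have h₂ := hΓ.odd_incDist p L
    have h₃ := hΓ.incDist_le_six (Sum.inl p) (Sum.inr L)
    grind
  have hfar : ∀ p, ∀ x ∈ Γ.pts L, f p ≠ x →
      Γ.incDist (Sum.inl p) (Sum.inl x) = Γ.incDist (Sum.inl p) (Sum.inr L) + 1 := by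
    intro p x hx hne
    rcases hΓ.incDist_flag p hx with h | h
    · exact absurd (hΓ.nearest_unique p (hf p) hx (hfd p) h) hne
    · exact h
  have hclose : ∀ p, Γ.CloseTo p L → p ∈ S → ∀ x ∈ Γ.pts L, (∀ q ∈ S, ¬ Γ.Collinear x q) →
      Γ.incDist (Sum.inl p) (Sum.inl x) = 4 := by
    rintro p ⟨z, ⟨hz, hpz⟩, -⟩ hp x hx hno
    have hfz := hfx p hp z hz hpz.symm
    have h₁ := hΓ.collinear_iff.1 hpz
    have h₂ := hfd p
    rw [hfz] at h₂
    have h₃ := hfar p x hx fun h => hno p hp (by rw [← h, hfz]; exact hpz.symm)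
    lia
  -- A point of `L` collinear to no member of `S` is the projection of two members of `S`.
  have hfibre : ∀ x ∈ Γ.pts L, (∀ q ∈ S, ¬ Γ.Collinear x q) →
      ∃ p ∈ S, ∃ q ∈ S, p ≠ q ∧ f p = x ∧ f q = x := by
    intro x hx hno
    by_contra! hsub
    have hdist : ∀ M, x ∈ Γ.pts M → M ≠ L → ∀ p ∈ S,
        (f p = x → Γ.incDist (Sum.inl p) (Sum.inr M) ≠ 3) →
        Γ.incDist (Sum.inl p) (Sum.inr M) = 5 := by
      intro M hxM hML p hp hM3
      have h₁ := hΓ.incDist_flag p hxM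
      have h₂ := hΓ.incDist_le_six (Sum.inl p) (Sum.inr M)
      have h₃ := hΓ.odd_incDist p M
      rcases hdL p hp with hd | hd
      · by_cases hpx : f p = x
        · refine absurd (hΓ.collinear_iff.2 ?_).symm (hno p hp)
          rw [← hpx]
          have := hfd p
          lia
        · have h₄ := hfar p x hx hpx
          rcases h₁ with h₁ | h₁
          · lia
          · exact absurd (hΓ.nearest_line_unique p hxM hx (by lia) h₁ h₄) hML
      · by_cases hpx : f p = x
        · have h₅ := hfd p
          rw [hpx] at h₅
          have := hM3 hpx
          lia
        · have h₄ := hfar p x hx hpx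
          grind
    obtain ⟨B, hB⟩ : ∃ B, ∀ M, x ∈ Γ.pts M → M ≠ L → M ≠ B → ∀ p ∈ S,
        Γ.incDist (Sum.inl p) (Sum.inr M) = 5 := by
      by_cases hex : ∃ p ∈ S, f p = x ∧ ∃ B, x ∈ Γ.pts B ∧ Γ.incDist (Sum.inl p) (Sum.inr B) = 3
      · obtain ⟨p, hp, hpx, B, hxB, hpB⟩ := hex
        refine ⟨B, fun M hxM hML hMB q hq => hdist M hxM hML q hq fun hqx hqM => hMB ?_⟩
        obtain rfl : p = q := by
          by_contra hpq
          exact hsub p hp q hq hpq hpx hqx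
        have h₅ : Γ.incDist (Sum.inl p) (Sum.inl x) = 4 := by
          have h₁ := hfd p
          rw [hpx] at h₁
          have h₂ := mt hΓ.collinear_iff.2 fun h => hno p hp h.symm
          have h₃ := hdL p hp
          lia
        exact hΓ.nearest_line_unique p hxM hxB (by lia) (by lia) (by lia)
      · push Not at hex
        exact ⟨L, fun M hxM hML _ q hq => hdist M hxM hML q hq fun hqx => hex q hq hqx M hxM⟩
    obtain ⟨M, hxM, hM⟩ : ∃ M, x ∈ Γ.pts M ∧ M ∉ ({L, B} : Set Γ.Line) := by
      by_contra! hsubset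
      have h₁ := (Set.encard_le_encard (show {M | x ∈ Γ.pts M} ⊆ {L, B} from hsubset)).trans
        (Set.encard_insert_le {B} L)
      rw [hord.2 x, Set.encard_singleton, one_add_one_eq_two] at h₁
      have h₂ : t + 1 ≤ 2 := by exact_mod_cast h₁
      lia
    simp only [Set.mem_insert_iff, Set.mem_singleton_iff, not_or] at hM
    exact hblock (hΓ.exists_opposite_of_forall_incDist_eq_five hSfin
      (by rw [hScard, hLcard]) (hB M hxM hM.1 hM.2) hp₀ hp₁ hopp.1 hxM
      (hclose p₀ hc₀ hp₀ x hx hno) (hclose p₁ hc₁ hp₁ x hx hno))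
  have hinj : ∀ p ∈ S, ∀ q ∈ S, f p = f q → p = q := by
    intro p hp q hq hpq
    refine Set.inj_on_of_surj_on_of_ncard_le (fun r _ => f r) (fun r _ => hf r) ?_
      (by rw [hScard, hLcard]) hp hq hpq hSfin
    intro x hx
    by_cases hno : ∀ q ∈ S, ¬ Γ.Collinear x q
    · obtain ⟨r, hr, -, -, -, hrx, -⟩ := hfibre x hx hno
      exact ⟨r, hr, hrx⟩
    · push Not at hno
      obtain ⟨r, hr, hxr⟩ := hno
      exact ⟨r, hr, hfx r hr x hx hxr⟩
  have hcol : ∀ x ∈ Γ.pts L, ∃ p ∈ S, Γ.Collinear x p := by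
    intro x hx
    by_contra! hno
    obtain ⟨p, hp, q, hq, hpq, hpx, hqx⟩ := hfibre x hx hno
    exact hpq (hinj p hp q hq (hpx.trans hqx.symm))
  constructor
  · intro p hp
    obtain ⟨q, hq, hpq⟩ := hcol (f p) (hf p)
    obtain rfl := hinj q hq p hp (hfx q hq (f p) (hf p) hpq)
    exact hΓ.closeTo_of_collinear (hLS q hq) (hf q) hpq.symm
  · intro x hx
    obtain ⟨p, hp, hxp⟩ := hcol x hx
    refine ⟨p, ⟨hp, hxp⟩, fun q hq => hinj q hq.1 p hp ?_⟩
    rw [hfx q hq.1 x hx hq.2, hfx p hp x hx hxp]
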